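/- arXiv:2603.05358 — 4 statements merged into one kernel-verified Lean document; each statement's English description precedes it below -/
import Mathlib

section
/- Let S be a finite set of points in the Euclidean plane, let T ⊆ S, let r_min, r_max be reals with 0 < r_min ≤ r_max, and let H be a simple graph on vertex set S such that for all distinct p, q ∈ S \ T, p and q are adjacent in H if and only if dist(p,q) ≤ 2. Then the following are equivalent: (1) there exists r : S → ℝ with r_min ≤ r(p) ≤ r_max for all p ∈ T and r(p) = 1 for all p ∈ S \ T such that for all distinct p, q ∈ S, p and q are adjacent in H if and only if dist(p,q) ≤ r(p) + r(q); (2) there exist x : T → ℝ and a real ε > 0 such that: r_min ≤ x(p) ≤ r_max for all p ∈ T; for every p ∈ T and every q ∈ S \ T, if p and q are adjacent in H then x(p) + 1 ≥ dist(p,q), and if p ≠ q and p, q are not adjacent in H then x(p) + 1 ≤ dist(p,q) − ε; and for all distinct p, q ∈ T, if p and q are adjacent in H then x(p) + x(q) ≥ dist(p,q), and otherwise x(p) + x(q) ≤ dist(p,q) − ε. -/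
/-!
The LP replaces each strict inequality `r p + r q < dist p q` at a non-edge by
`r p + r q ≤ dist p q - ε`, with one `ε > 0` for all pairs. As there are finitely many non-edges,
their positive gaps `dist p q - (r p + r q)` have a common positive lower bound, so nothing is lost.
Conversely, a solution of the LP is extended by the prescribed radii outside `T`; the LP does not
mention pairs outside `T`, and for these the assumption on `H` is exactly what is needed.
-/

section DiskGraph

variable {V : Type*} [PseudoMetricSpace V] {H : SimpleGraph V} {r : V → ℝ} {ε : ℝ} {p q : V}

/-- The target graph `H` and the disk graph of the radius assignment `r` agree on the pair `p, q`.
It is meant for distinct points: `r` realizes `H` on a set `S` if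
`S.Pairwise (RealizesPair H r)`. -/
def RealizesPair (H : SimpleGraph V) (r : V → ℝ) (p q : V) : Prop :=
  H.Adj p q ↔ dist p q ≤ r p + r q

/-- The linear constraint which the LP with slack variable `ε` imposes on the radii of a pair of
distinct points `p, q` for the target graph `H`. -/
def LPConstraint (H : SimpleGraph V) (r : V → ℝ) (ε : ℝ) (p q : V) : Prop :=
  (H.Adj p q → r p + r q ≥ dist p q) ∧ (¬H.Adj p q → r p + r q ≤ dist p q - ε)

theorem RealizesPair.symm (h : RealizesPair H r p q) : RealizesPair H r q p := by
  rwa [RealizesPair, H.adj_comm, dist_comm, add_comm]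

instance : Std.Symm (RealizesPair H r) := ⟨fun _ _ => RealizesPair.symm⟩

theorem LPConstraint.realizesPair (hε : 0 < ε) (h : LPConstraint H r ε p q) :
    RealizesPair H r p q := by
  refine ⟨h.1, fun hle => by_contra fun hnadj => ?_⟩
  exact (hle.trans (h.2 hnadj)).not_gt (sub_lt_self _ hε)

theorem exists_pos_pairwise_lpConstraint {S : Set V} (hS : S.Finite)
    (h : S.Pairwise (RealizesPair H r)) : ∃ ε > 0, S.Pairwise (LPConstraint H r ε) := by
  let nonEdges : Set (V × V) := {z ∈ S.offDiag | ¬H.Adj z.1 z.2}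
  have : Finite nonEdges := (hS.offDiag.sep _).to_subtype
  have hlt (z : nonEdges) : r z.1.1 + r z.1.2 < dist z.1.1 z.1.2 := by
    obtain ⟨⟨p, q⟩, ⟨hp, hq, hne⟩, hnadj⟩ := z
    exact not_le.1 (mt (h hp hq hne).2 hnadj)
  obtain ⟨ε, hε, hgap⟩ := Pi.exists_forall_pos_add_lt hlt
  exact ⟨ε, hε, fun p hp q hq hne => ⟨(h hp hq hne).1, fun hnadj =>
    le_sub_iff_add_le.2 (hgap ⟨(p, q), ⟨hp, hq, hne⟩, hnadj⟩).le⟩⟩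

theorem pairwise_union_realizesPair_of_lpConstraint {T F : Set V} (hε : 0 < ε)
    (hT : T.Pairwise (LPConstraint H r ε)) (hTF : ∀ p ∈ T, ∀ q ∈ F, LPConstraint H r ε p q)
    (hF : F.Pairwise (RealizesPair H r)) : (T ∪ F).Pairwise (RealizesPair H r) :=
  Set.pairwise_union_of_symm.2
    ⟨hT.mono' fun _ _ => LPConstraint.realizesPair hε, hF,
      fun p hp q hq _ => (hTF p hp q hq).realizesPair hε⟩

theorem lp_correctness_general (S T : Finset V) (hTS : T ⊆ S) (R : V → Set ℝ) (ρ : V → ℝ)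
    (H : SimpleGraph V)
    (hH : ∀ p ∈ S, ∀ q ∈ S, p ∉ T → q ∉ T → p ≠ q → (H.Adj p q ↔ dist p q ≤ ρ p + ρ q)) :
    (∃ r : V → ℝ,
        (∀ p ∈ T, r p ∈ R p) ∧
        (∀ p ∈ S, p ∉ T → r p = ρ p) ∧
        (∀ p ∈ S, ∀ q ∈ S, p ≠ q → (H.Adj p q ↔ dist p q ≤ r p + r q)))
    ↔
    (∃ (x : V → ℝ) (ε : ℝ), 0 < ε ∧
        (∀ p ∈ T, x p ∈ R p) ∧
        (∀ p ∈ T, ∀ q ∈ S, q ∉ T →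
          (H.Adj p q → x p + ρ q ≥ dist p q) ∧
          (p ≠ q → ¬ H.Adj p q → x p + ρ q ≤ dist p q - ε)) ∧
        (∀ p ∈ T, ∀ q ∈ T, p ≠ q →
          (H.Adj p q → x p + x q ≥ dist p q) ∧
          (¬ H.Adj p q → x p + x q ≤ dist p q - ε))) := by
  classical
  constructor
  · rintro ⟨r, hR, hρ, hadj⟩
    obtain ⟨ε, hε, hLP⟩ := exists_pos_pairwise_lpConstraint S.finite_toSet
      (fun p hp q hq => hadj p hp q hq)
    refine ⟨r, ε, hε, hR, fun p hp q hq hqT => ?_,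
      fun p hp q hq hne => hLP (hTS hp) (hTS hq) hne⟩
    have hne : p ≠ q := ne_of_mem_of_not_mem hp hqT
    rw [← hρ q hq hqT]
    exact (hLP (hTS hp) hq hne).imp_right fun h _ => h
  · rintro ⟨x, ε, hε, hR, hmixed, hT⟩
    let r : V → ℝ := T.piecewise x ρ
    have hrx {p : V} (hp : p ∈ T) : r p = x p := T.piecewise_eq_of_mem x ρ hp
    have hrρ {p : V} (hp : p ∉ T) : r p = ρ p := T.piecewise_eq_of_notMem x ρ hp
    have hrT : (T : Set V).Pairwise (LPConstraint H r ε) := fun p hp q hq hne => by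
      simpa only [LPConstraint, hrx hp, hrx hq] using hT p hp q hq hne
    have hrmixed : ∀ p ∈ (T : Set V), ∀ q ∈ (S \ T : Set V), LPConstraint H r ε p q := by
      rintro p hp q ⟨hq, hqT⟩
      have hne : p ≠ q := ne_of_mem_of_not_mem hp hqT
      simpa only [LPConstraint, hrx hp, hrρ hqT] using (hmixed p hp q hq hqT).imp_right (· hne)
    have hrfixed : (S \ T : Set V).Pairwise (RealizesPair H r) := by
      rintro p ⟨hp, hpT⟩ q ⟨hq, hqT⟩ hne
      simpa only [RealizesPair, hrρ hpT, hrρ hqT] using hH p hp q hq hpT hqT hne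
    have hr := pairwise_union_realizesPair_of_lpConstraint hε hrT hrmixed hrfixed
    rw [Set.union_sdiff_cancel (Finset.coe_subset.2 hTS)] at hr
    exact ⟨r, fun p hp => (hrx hp).symm ▸ hR p hp, fun p _ hpT => hrρ hpT,
      fun p hp q hq hne => hr hp hq hne⟩

end DiskGraph

/-- Correctness of the LP formulation for Constrained Scaling To Graph. -/
theorem lp_correctness
    (S T : Finset (EuclideanSpace ℝ (Fin 2))) (hTS : T ⊆ S)
    (rmin rmax : ℝ) (hrmin : 0 < rmin) (hminmax : rmin ≤ rmax)
    (H : SimpleGraph (EuclideanSpace ℝ (Fin 2)))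
    (hH : ∀ p ∈ S, ∀ q ∈ S, p ∉ T → q ∉ T → p ≠ q → (H.Adj p q ↔ dist p q ≤ 2)) :
    (∃ r : EuclideanSpace ℝ (Fin 2) → ℝ,
        (∀ p ∈ T, rmin ≤ r p ∧ r p ≤ rmax) ∧
        (∀ p ∈ S, p ∉ T → r p = 1) ∧
        (∀ p ∈ S, ∀ q ∈ S, p ≠ q → (H.Adj p q ↔ dist p q ≤ r p + r q)))
    ↔
    (∃ (x : EuclideanSpace ℝ (Fin 2) → ℝ) (ε : ℝ), 0 < ε ∧
        (∀ p ∈ T, rmin ≤ x p ∧ x p ≤ rmax) ∧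
        (∀ p ∈ T, ∀ q ∈ S, q ∉ T →
          (H.Adj p q → x p + 1 ≥ dist p q) ∧
          (p ≠ q → ¬ H.Adj p q → x p + 1 ≤ dist p q - ε)) ∧
        (∀ p ∈ T, ∀ q ∈ T, p ≠ q →
          (H.Adj p q → x p + x q ≥ dist p q) ∧
          (¬ H.Adj p q → x p + x q ≤ dist p q - ε))) :=
  lp_correctness_general S T hTS (fun _ => Set.Icc rmin rmax) (fun _ => 1) H
    (by simpa only [one_add_one_eq_two] using hH)
end

section
/- Let S be a finite set of points in the Euclidean plane, let r_min, r_max be reals with 0 < r_min ≤ r_max and 1 < r_max, and let k be a natural number. Assume dist(p, q) ≤ 2·r_max for all p, q ∈ S. Let T' := {p ∈ S : ∃ q ∈ S with dist(p, q) > 1 + r_max} and assume |T'| ≤ k. Let X := {p ∈ S \ T' : ∃ q ∈ S with 2 < dist(p, q) ≤ 1 + r_max}. Then the following are equivalent: (1) there exists r : S → ℝ such that for every p ∈ S either r(p) = 1 or r_min ≤ r(p) ≤ r_max, the set {p ∈ S : r(p) ≠ 1} has at most k elements, and the disk graph G(S, r) is complete; (2) there exists Y ⊆ X with |Y| ≥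 |X| − (k − |T'|) such that dist(p, q) ≤ 2 for all p, q ∈ Y (that is, Y is a clique of size |X| − (k − |T'|) in the unit disk graph on X). -/
/-!
A disk at distance more than `1 + rmax` from some other point must be scaled, since a unit disk and
a disk of radius at most `rmax` do not reach that far. Given a solution, the unscaled points of `X`
form a clique of the unit disk graph, and since `T'` is scaled and disjoint from `X`, at most
`k - |T'|` points of `X` are scaled. Conversely, given a clique `Y`, scale exactly `T' ∪ (X \ Y)` to
`rmax`: two scaled disks meet by the diameter bound, a scaled and an unscaled one because the latter
is outside `T'`, and two unscaled points at distance more than `2` would both lie in `Y`.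
-/

section Counting

variable {α : Type*} {A T X Y : Set α} {k : ℕ}

theorem ncard_tsub_le_ncard_sdiff_of_disjoint (hA : A.Finite) (hTA : T ⊆ A) (hTX : Disjoint X T)
    (hAk : A.ncard ≤ k) : X.ncard - (k - T.ncard) ≤ (X \ A).ncard := by
  have hXA : X \ (A \ T) = X \ A := by
    rw [Set.sdiff_sdiff_right, hTX.inter_eq, Set.union_empty]
  have hX : X.ncard ≤ (X \ A).ncard + (A \ T).ncard :=
    hXA ▸ Set.ncard_le_ncard_sdiff_add_ncard X (A \ T) hA.sdiff
  have hAT : (A \ T).ncard + T.ncard = A.ncard := Set.ncard_sdiff_add_ncard_of_subset hTA hA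
  lia

theorem ncard_union_sdiff_le (hX : X.Finite) (hYX : Y ⊆ X) (hTk : T.ncard ≤ k)
    (hY : X.ncard - (k - T.ncard) ≤ Y.ncard) : (T ∪ X \ Y).ncard ≤ k := by
  have hunion : (T ∪ X \ Y).ncard ≤ T.ncard + (X \ Y).ncard := Set.ncard_union_le T (X \ Y)
  have hXY : (X \ Y).ncard + Y.ncard = X.ncard := Set.ncard_sdiff_add_ncard_of_subset hYX hX
  lia

end Counting

section DiskScaling

variable {E : Type*}

/-- The scaled disks of a radius assignment on `S`. The assignment is defined on the whole space,
but only its values on `S` count. -/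
def scaledSet (S : Set E) (r : E → ℝ) : Set E :=
  S ∩ Function.mulSupport r

theorem scaledSet_mulIndicator_subset (S A : Set E) (f : E → ℝ) :
    scaledSet S (A.mulIndicator f) ⊆ A :=
  Set.inter_subset_right.trans Set.mulSupport_mulIndicator_subset

variable [PseudoMetricSpace E] {S A : Set E} {r : E → ℝ} {R : ℝ} {p q : E}

/-- Completeness of the disk graph `G(S, r)`. -/
def IsCompleteDiskGraph (S : Set E) (r : E → ℝ) : Prop :=
  S.Pairwise fun p q => dist p q ≤ r p + r q

/-- The set `T'` of disks that every solution with radii at most `R` has to scale. -/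
def forcedSet (S : Set E) (R : ℝ) : Set E :=
  {p | p ∈ S ∧ ∃ q ∈ S, 1 + R < dist p q}

/-- The set `X` of non-forced disks in conflict, as unit disks, with another one: of two disks in
conflict at least one has to be scaled. -/
def conflictSet (S : Set E) (R : ℝ) : Set E :=
  {p | p ∈ S ∧ p ∉ forcedSet S R ∧ ∃ q ∈ S, 2 < dist p q ∧ dist p q ≤ 1 + R}

theorem disjoint_conflictSet_forcedSet (S : Set E) (R : ℝ) :
    Disjoint (conflictSet S R) (forcedSet S R) :=
  Set.disjoint_left.2 fun _ hp => hp.2.1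

theorem dist_le_of_notMem_forcedSet (hp : p ∈ S) (hpT : p ∉ forcedSet S R) (hq : q ∈ S) :
    dist p q ≤ 1 + R :=
  not_lt.1 fun hpq => hpT ⟨hp, q, hq, hpq⟩

theorem mem_conflictSet_of_two_lt_dist (hp : p ∈ S) (hpT : p ∉ forcedSet S R) (hq : q ∈ S)
    (hpq : 2 < dist p q) : p ∈ conflictSet S R :=
  ⟨hp, hpT, q, hq, hpq, dist_le_of_notMem_forcedSet hp hpT hq⟩

theorem IsCompleteDiskGraph.dist_le_two (h : IsCompleteDiskGraph S r)
    (hp : p ∈ S \ scaledSet S r) (hq : q ∈ S \ scaledSet S r) : dist p q ≤ 2 := by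
  have hrp : r p = 1 := of_not_not fun hne => hp.2 ⟨hp.1, hne⟩
  have hrq : r q = 1 := of_not_not fun hne => hq.2 ⟨hq.1, hne⟩
  obtain rfl | hpq := eq_or_ne p q
  · simp
  · linarith [h hp.1 hq.1 hpq]

theorem IsCompleteDiskGraph.forcedSet_subset_scaledSet (h : IsCompleteDiskGraph S r)
    (hr : ∀ p ∈ S, r p ≤ R) : forcedSet S R ⊆ scaledSet S r := by
  rintro p ⟨hp, q, hq, hpq⟩
  refine ⟨hp, fun hrp : r p = 1 => ?_⟩
  have hne : p ≠ q := by
    rintro rfl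
    linarith [hr p hp, dist_self p]
  linarith [h hp hq hne, hr q hq]

theorem isCompleteDiskGraph_mulIndicator (hdiam : ∀ p ∈ S, ∀ q ∈ S, dist p q ≤ 2 * R)
    (hforced : forcedSet S R ⊆ A)
    (hclique : ∀ p ∈ conflictSet S R \ A, ∀ q ∈ conflictSet S R \ A, dist p q ≤ 2) :
    IsCompleteDiskGraph S (A.mulIndicator fun _ => R) := by
  intro p hp q hq _
  by_cases hpA : p ∈ A <;> by_cases hqA : q ∈ A <;>
    simp only [hpA, hqA, not_false_eq_true, Set.mulIndicator_of_mem, Set.mulIndicator_of_notMem]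
  · linarith [hdiam p hp q hq]
  · linarith [dist_le_of_notMem_forcedSet hq (mt (@hforced q) hqA) hp, dist_comm p q]
  · exact dist_le_of_notMem_forcedSet hp (mt (@hforced p) hpA) hq
  · by_contra! hfar
    rw [one_add_one_eq_two] at hfar
    have hpX : p ∈ conflictSet S R :=
      mem_conflictSet_of_two_lt_dist hp (mt (@hforced p) hpA) hq hfar
    have hqX : q ∈ conflictSet S R :=
      mem_conflictSet_of_two_lt_dist hq (mt (@hforced q) hqA) hp (dist_comm p q ▸ hfar)
    exact (hclique p ⟨hpX, hpA⟩ q ⟨hqX, hqA⟩).not_gt hfar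

theorem scaling_to_complete_iff_clique_general {rmin rmax : ℝ} {k : ℕ} (hS : S.Finite)
    (hminmax : rmin ≤ rmax) (hrmax : 1 ≤ rmax) (hdiam : ∀ p ∈ S, ∀ q ∈ S, dist p q ≤ 2 * rmax)
    (hT : (forcedSet S rmax).ncard ≤ k) :
    (∃ r : E → ℝ, (∀ p ∈ S, r p = 1 ∨ (rmin ≤ r p ∧ r p ≤ rmax)) ∧
        (scaledSet S r).ncard ≤ k ∧ IsCompleteDiskGraph S r) ↔
      ∃ Y ⊆ conflictSet S rmax,
        (conflictSet S rmax).ncard - (k - (forcedSet S rmax).ncard) ≤ Y.ncard ∧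
          ∀ p ∈ Y, ∀ q ∈ Y, dist p q ≤ 2 := by
  constructor
  · rintro ⟨r, hr, hcard, hcomplete⟩
    have hr_le : ∀ p ∈ S, r p ≤ rmax := fun p hp => (hr p hp).elim (·.trans_le hrmax) And.right
    refine ⟨conflictSet S rmax \ scaledSet S r, Set.sdiff_subset, ?_, fun p hp q hq => ?_⟩
    · exact ncard_tsub_le_ncard_sdiff_of_disjoint (hS.inter_of_left _)
        (hcomplete.forcedSet_subset_scaledSet hr_le) (disjoint_conflictSet_forcedSet S rmax) hcard
    · exact hcomplete.dist_le_two ⟨hp.1.1, hp.2⟩ ⟨hq.1.1, hq.2⟩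
  · rintro ⟨Y, hYX, hYcard, hY⟩
    have hXfin : (conflictSet S rmax).Finite := hS.subset fun _ hp => hp.1
    have hTfin : (forcedSet S rmax).Finite := hS.subset fun _ hp => hp.1
    set A : Set E := forcedSet S rmax ∪ conflictSet S rmax \ Y
    have hXA : conflictSet S rmax \ A ⊆ Y := fun p hp =>
      of_not_not fun hpY => hp.2 (Or.inr ⟨hp.1, hpY⟩)
    refine ⟨A.mulIndicator fun _ => rmax, fun p _ => ?_, ?_, ?_⟩
    · exact (Set.mulIndicator_eq_one_or_self A (fun _ => rmax) p).imp_right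
        fun hp => ⟨hminmax.trans_eq hp.symm, hp.le⟩
    · exact (Set.ncard_le_ncard (scaledSet_mulIndicator_subset S A _)
        (hTfin.union hXfin.sdiff)).trans (ncard_union_sdiff_le hXfin hYX hT hYcard)
    · exact isCompleteDiskGraph_mulIndicator hdiam Set.subset_union_left
        fun p hp q hq => hY p (hXA hp) q (hXA hq)

end DiskScaling

/-- The combinatorial core of the polynomial-time algorithm for Scaling To Complete:
after scaling the forced set `T'`, solvability is equivalent to the existence of a
large clique in the unit disk graph on the set `X`. -/
theorem scaling_to_complete_iff_clique
    (S : Finset (EuclideanSpace ℝ (Fin 2)))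
    (rmin rmax : ℝ) (k : ℕ)
    (hrmin : 0 < rmin) (hminmax : rmin ≤ rmax) (hrmax : 1 < rmax)
    (hdiam : ∀ p ∈ S, ∀ q ∈ S, dist p q ≤ 2 * rmax) :
    let T' : Set (EuclideanSpace ℝ (Fin 2)) :=
      {p | p ∈ S ∧ ∃ q ∈ S, 1 + rmax < dist p q}
    let X : Set (EuclideanSpace ℝ (Fin 2)) :=
      {p | p ∈ S ∧ p ∉ T' ∧ ∃ q ∈ S, 2 < dist p q ∧ dist p q ≤ 1 + rmax}
    T'.ncard ≤ k →
    ((∃ r : EuclideanSpace ℝ (Fin 2) → ℝ,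
        (∀ p ∈ S, r p = 1 ∨ (rmin ≤ r p ∧ r p ≤ rmax)) ∧
        {p | p ∈ S ∧ r p ≠ 1}.ncard ≤ k ∧
        (∀ p ∈ S, ∀ q ∈ S, p ≠ q → dist p q ≤ r p + r q)) ↔
      (∃ Y ⊆ X, X.ncard - (k - T'.ncard) ≤ Y.ncard ∧
        ∀ p ∈ Y, ∀ q ∈ Y, dist p q ≤ 2)) :=
  scaling_to_complete_iff_clique_general S.finite_toSet hminmax hrmax.le hdiam
end

section
/- Let η ≥ 1 and κ ≥ 1 be integers and let X be a Grid Tiling instance, i.e., finite sets X_{i,j} ⊆ {1,…,η} × {1,…,η} for all i, j ∈ {1,…,κ}. Define X'_{i,j} := {(a·η² + i, b·η² + j) : (a, b) ∈ X_{i,j}}. Then X has a ≤-solution (a choice x_{i,j} = (a_{i,j}, b_{i,j}) ∈ X_{i,j} for all i, j with a_{i,j} ≤ a_{i+1,j} for all 1 ≤ i < κ, 1 ≤ j ≤ κ, and b_{i,j} ≤ b_{i,j+1} for all 1 ≤ i ≤ κ, 1 ≤ j < κ) if and only if X' has a <-solution (a choice x'_{i,j} ∈ X'_{i,j} whose first coordinates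 are strictly increasing along every row from column i to column i+1 and whose second coordinates are strictly increasing along every column from row j to row j+1). -/
/-!
Neighbouring cells carry offsets that differ by exactly one, and `a * m + i < b * m + (i + 1)`
holds exactly when `a * m ≤ b * m`, that is, when `a ≤ b`. Hence applying
`(a, b) ↦ (a * m + i, b * m + j)` in each cell `(i, j)` turns `≤`-solutions into `<`-solutions, and
choosing preimages cell by cell turns `<`-solutions back into `≤`-solutions.
-/

/-- The choice `x` is an `r`-solution of the Grid Tiling instance `X` on the `κ × κ` grid. Cells are
indexed from `1`, and the values of `X` and `x` outside `{1, …, κ}²` are irrelevant. The sets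
`X i j` may be infinite, with entries in any type. -/
def IsGridTilingSolution {α : Type*} (r : α → α → Prop) (κ : ℕ) (X : ℕ → ℕ → Set (α × α))
    (x : ℕ → ℕ → α × α) : Prop :=
  (∀ i ∈ Finset.Icc 1 κ, ∀ j ∈ Finset.Icc 1 κ, x i j ∈ X i j) ∧
  (∀ i, 1 ≤ i → i < κ → ∀ j ∈ Finset.Icc 1 κ, r (x i j).1 (x (i + 1) j).1) ∧
  (∀ i ∈ Finset.Icc 1 κ, ∀ j, 1 ≤ j → j < κ → r (x i j).2 (x i (j + 1)).2)

namespace IsGridTilingSolution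

variable {α β : Type*} {r : α → α → Prop} {s : β → β → Prop} {f : ℕ → α → β} {κ : ℕ}
  {X : ℕ → ℕ → Set (α × α)}

theorem image {x : ℕ → ℕ → α × α} (hx : IsGridTilingSolution r κ X x)
    (hf : ∀ i a b, r a b → s (f i a) (f (i + 1) b)) :
    IsGridTilingSolution s κ (fun i j => Prod.map (f i) (f j) '' X i j)
      (fun i j => Prod.map (f i) (f j) (x i j)) := by
  obtain ⟨hmem, hfst, hsnd⟩ := hx
  exact ⟨fun i hi j hj => Set.mem_image_of_mem _ (hmem i hi j hj),
    fun i h₁ hκ j hj => hf i _ _ (hfst i h₁ hκ j hj),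
    fun i hi j h₁ hκ => hf j _ _ (hsnd i hi j h₁ hκ)⟩

theorem exists_of_image [Nonempty α] {y : ℕ → ℕ → β × β}
    (hy : IsGridTilingSolution s κ (fun i j => Prod.map (f i) (f j) '' X i j) y)
    (hf : ∀ i a b, s (f i a) (f (i + 1) b) → r a b) :
    ∃ x, IsGridTilingSolution r κ X x := by
  obtain ⟨hmem, hfst, hsnd⟩ := hy
  choose! x hxX hxy using hmem
  have mem_left {i : ℕ} (h₁ : 1 ≤ i) (hκ : i < κ) : i ∈ Finset.Icc 1 κ :=
    Finset.mem_Icc.2 ⟨h₁, hκ.le⟩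
  have mem_right {i : ℕ} (hκ : i < κ) : i + 1 ∈ Finset.Icc 1 κ :=
    Finset.mem_Icc.2 ⟨i.succ_pos, hκ⟩
  refine ⟨x, hxX, fun i h₁ hκ j hj => hf i _ _ ?_, fun i hi j h₁ hκ => hf j _ _ ?_⟩
  · have h := hfst i h₁ hκ j hj
    rwa [← hxy i (mem_left h₁ hκ) j hj, ← hxy (i + 1) (mem_right hκ) j hj] at h
  · have h := hsnd i hi j h₁ hκ
    rwa [← hxy i hi j (mem_left h₁ hκ), ← hxy i hi (j + 1) (mem_right hκ)] at h

theorem exists_iff_exists_image [Nonempty α]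
    (hf : ∀ i a b, r a b ↔ s (f i a) (f (i + 1) b)) :
    (∃ x, IsGridTilingSolution r κ X x) ↔
      ∃ y, IsGridTilingSolution s κ (fun i j => Prod.map (f i) (f j) '' X i j) y :=
  ⟨fun ⟨_, hx⟩ => ⟨_, hx.image fun i a b => (hf i a b).1⟩,
    fun ⟨_, hy⟩ => hy.exists_of_image fun i a b => (hf i a b).2⟩

end IsGridTilingSolution

section Scaling

variable {R : Type*} [Semiring R] [LinearOrder R] [IsStrictOrderedRing R] [SuccAddOrder R] {m : R}

theorem mul_add_lt_mul_add_add_one_iff (hm : 0 < m) (a b c : R) :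
    a * m + c < b * m + (c + 1) ↔ a ≤ b := by
  rw [← add_assoc, Order.lt_add_one_iff, add_le_add_iff_right, mul_le_mul_iff_left₀ hm]

theorem gridTiling_le_to_lt_general (hm : 0 < m) (κ : ℕ) (X : ℕ → ℕ → Set (R × R)) :
    (∃ x, IsGridTilingSolution (· ≤ ·) κ X x) ↔
      ∃ y, IsGridTilingSolution (· < ·) κ
        (fun i j => Prod.map (· * m + (i : R)) (· * m + (j : R)) '' X i j) y :=
  IsGridTilingSolution.exists_iff_exists_image (f := fun i a => a * m + (i : R)) fun i a b => by
    rw [Nat.cast_succ, mul_add_lt_mul_add_add_one_iff hm]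

end Scaling

/-- Correctness of the reduction from Grid Tiling with `≤` to Grid Tiling with `<`. -/
theorem gridTiling_le_to_lt
    (η κ : ℕ) (hη : 1 ≤ η) (hκ : 1 ≤ κ)
    (X : ℕ → ℕ → Finset (ℕ × ℕ))
    (hX : ∀ i ∈ Finset.Icc 1 κ, ∀ j ∈ Finset.Icc 1 κ, ∀ p ∈ X i j,
      p.1 ∈ Finset.Icc 1 η ∧ p.2 ∈ Finset.Icc 1 η) :
    (∃ x : ℕ → ℕ → ℕ × ℕ,
      (∀ i ∈ Finset.Icc 1 κ, ∀ j ∈ Finset.Icc 1 κ, x i j ∈ X i j) ∧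
      (∀ i, 1 ≤ i → i < κ → ∀ j ∈ Finset.Icc 1 κ, (x i j).1 ≤ (x (i + 1) j).1) ∧
      (∀ i ∈ Finset.Icc 1 κ, ∀ j, 1 ≤ j → j < κ → (x i j).2 ≤ (x i (j + 1)).2)) ↔
    (∃ x : ℕ → ℕ → ℕ × ℕ,
      (∀ i ∈ Finset.Icc 1 κ, ∀ j ∈ Finset.Icc 1 κ,
        x i j ∈ (X i j).image (fun p => (p.1 * η ^ 2 + i, p.2 * η ^ 2 + j))) ∧
      (∀ i, 1 ≤ i → i < κ → ∀ j ∈ Finset.Icc 1 κ, (x i j).1 < (x (i + 1) j).1) ∧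
      (∀ i ∈ Finset.Icc 1 κ, ∀ j, 1 ≤ j → j < κ → (x i j).2 < (x i (j + 1)).2)) := by
  simpa only [IsGridTilingSolution, Set.mem_image, Finset.mem_image, Finset.mem_coe, Prod.map,
    Nat.cast_id] using
    gridTiling_le_to_lt_general (pow_pos hη 2) κ fun i j => (X i j : Set (ℕ × ℕ))
end

section
/- Let S be a finite set of points in the Euclidean plane and let P be a finite collection of pairwise disjoint three-element subsets {u, v, w} of S such that dist(u, v) ≤ 2, dist(v, w) ≤ 2, and dist(u, w) > 2 (each triple induces a P3 in the unit disk graph G(S, 1)). If r : S → ℝ is a radius assignment such that the disk graph G(S, r) is P3-free, then the number of points p ∈ S with r(p) ≠ 1 is at least |P|. -/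
/-!
On a set where two radius assignments agree they have the same disk graph. Hence a P3 of the
unit disk graph that does not survive in the disk graph of `r` contains a scaled point, and
disjoint P3s contain distinct ones.
-/

/-- The graph `G[S]` induced on `S` is P3-free, i.e. a cluster graph, expressed as transitivity of
adjacency between distinct vertices of `S`. -/
def IsP3FreeOn {V : Type*} (G : SimpleGraph V) (S : Set V) : Prop :=
  ∀ u ∈ S, ∀ v ∈ S, ∀ w ∈ S, G.Adj u v → G.Adj v w → u ≠ w → G.Adj u w

/-- The disk graph of the radius assignment `r`, with all points of the space as vertices; the disk
graph `G(S, r)` of a point set `S` is its induced subgraph on `S`. Radii may be negative. -/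
def diskGraph {α : Type*} [PseudoMetricSpace α] (r : α → ℝ) : SimpleGraph α where
  Adj p q := p ≠ q ∧ dist p q ≤ r p + r q
  symm := ⟨fun p q h ↦ ⟨h.1.symm, by rw [dist_comm, add_comm]; exact h.2⟩⟩
  loopless := ⟨fun _ h ↦ h.1 rfl⟩

section P3Free

variable {V : Type*} {G H : SimpleGraph V} {S T : Set V}

theorem IsP3FreeOn.mono (hG : IsP3FreeOn G T) (hST : S ⊆ T) : IsP3FreeOn G S :=
  fun u hu v hv w hw ↦ hG u (hST hu) v (hST hv) w (hST hw)

theorem IsP3FreeOn.congr (hG : IsP3FreeOn G S)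
    (hGH : ∀ u ∈ S, ∀ v ∈ S, G.Adj u v ↔ H.Adj u v) : IsP3FreeOn H S := by
  intro u hu v hv w hw huv hvw huw
  rw [← hGH u hu v hv] at huv
  rw [← hGH v hv w hw] at hvw
  exact (hGH u hu w hw).mp (hG u hu v hv w hw huv hvw huw)

end P3Free

section DiskGraph

variable {α : Type*} [PseudoMetricSpace α] {r r' : α → ℝ} {S : Set α}

theorem diskGraph_adj {p q : α} : (diskGraph r).Adj p q ↔ p ≠ q ∧ dist p q ≤ r p + r q :=
  Iff.rfl

theorem diskGraph_adj_congr {p q : α} (hp : r p = r' p) (hq : r q = r' q) :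
    (diskGraph r).Adj p q ↔ (diskGraph r').Adj p q := by
  rw [diskGraph_adj, diskGraph_adj, hp, hq]

theorem IsP3FreeOn.exists_radius_ne (h : IsP3FreeOn (diskGraph r) S)
    (h' : ¬ IsP3FreeOn (diskGraph r') S) : ∃ p ∈ S, r p ≠ r' p := by
  by_contra! heq
  exact h' (h.congr fun p hp q hq ↦ diskGraph_adj_congr (heq p hp) (heq q hq))

theorem isP3FreeOn_diskGraph_iff :
    IsP3FreeOn (diskGraph r) S ↔
      ¬ ∃ u ∈ S, ∃ v ∈ S, ∃ w ∈ S, u ≠ v ∧ v ≠ w ∧ u ≠ w ∧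
        dist u v ≤ r u + r v ∧ dist v w ≤ r v + r w ∧ ¬ dist u w ≤ r u + r w := by
  simp only [IsP3FreeOn, diskGraph_adj]
  grind

theorem not_isP3FreeOn_diskGraph_one {u v w : α} (huv : dist u v ≤ 2) (hvw : dist v w ≤ 2)
    (huw : 2 < dist u w) : ¬ IsP3FreeOn (diskGraph 1) {u, v, w} := by
  have huv_ne : u ≠ v := by rintro rfl; exact hvw.not_gt huw
  have hvw_ne : v ≠ w := by rintro rfl; exact huv.not_gt huw
  have huw_ne : u ≠ w := by rintro rfl; rw [dist_self] at huw; linarith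
  rw [isP3FreeOn_diskGraph_iff, not_not]
  refine ⟨u, by simp, v, by simp, w, by simp, huv_ne, hvw_ne, huw_ne, ?_⟩
  simpa only [Pi.one_apply, one_add_one_eq_two, not_le] using ⟨huv, hvw, huw⟩

end DiskGraph

theorem encard_le_encard_of_pairwiseDisjoint_of_inter_nonempty {ι α : Type*} {s : Set ι}
    {t : ι → Set α} {A : Set α} (hdisj : s.PairwiseDisjoint t) (hA : ∀ i ∈ s, (t i ∩ A).Nonempty) :
    s.encard ≤ A.encard := by
  choose f hft hfA using hA
  let g : s → A := fun i ↦ ⟨f i i.2, hfA i i.2⟩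
  have hg : Function.Injective g := fun i j hij ↦ by
    have hf : f i i.2 = f j j.2 := congrArg Subtype.val hij
    exact Subtype.ext (hdisj.elim_set i.2 j.2 _ (hft i i.2) (hf ▸ hft j j.2))
  exact Function.Embedding.encard_le ⟨g, hg⟩

theorem p3_packing_lower_bound_general {α ι : Type*} [PseudoMetricSpace α] {r₀ r : α → ℝ}
    {S : Set α} {P : Set ι} {t : ι → Set α} (hsub : ∀ i ∈ P, t i ⊆ S)
    (hdisj : P.PairwiseDisjoint t) (hP3 : ∀ i ∈ P, ¬ IsP3FreeOn (diskGraph r₀) (t i))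
    (hfree : IsP3FreeOn (diskGraph r) S) :
    P.encard ≤ {p | p ∈ S ∧ r p ≠ r₀ p}.encard := by
  refine encard_le_encard_of_pairwiseDisjoint_of_inter_nonempty hdisj fun i hi ↦ ?_
  obtain ⟨p, hp, hrp⟩ := (hfree.mono (hsub i hi)).exists_radius_ne (hP3 i hi)
  exact ⟨p, hp, hsub i hi hp, hrp⟩

/-- The P3-packing lower bound of Phase 1 of the FPT algorithm for Scaling To
Cluster: any radius assignment whose disk graph is P3-free must scale at least one
disk per P3 of a vertex-disjoint P3 packing of the unit disk graph. -/
theorem p3_packing_lower_bound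
    (S : Finset (EuclideanSpace ℝ (Fin 2)))
    (P : Finset (Finset (EuclideanSpace ℝ (Fin 2))))
    (hsub : ∀ t ∈ P, t ⊆ S)
    (hdisj : ∀ t ∈ P, ∀ t' ∈ P, t ≠ t' → Disjoint t t')
    (htriple : ∀ t ∈ P, ∃ u v w : EuclideanSpace ℝ (Fin 2),
      u ≠ v ∧ v ≠ w ∧ u ≠ w ∧ (t : Set (EuclideanSpace ℝ (Fin 2))) = {u, v, w} ∧
      dist u v ≤ 2 ∧ dist v w ≤ 2 ∧ 2 < dist u w)
    (r : EuclideanSpace ℝ (Fin 2) → ℝ)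
    (hP3free : ¬ ∃ u ∈ S, ∃ v ∈ S, ∃ w ∈ S, u ≠ v ∧ v ≠ w ∧ u ≠ w ∧
      dist u v ≤ r u + r v ∧ dist v w ≤ r v + r w ∧ ¬ dist u w ≤ r u + r w) :
    P.card ≤ {p | p ∈ S ∧ r p ≠ 1}.ncard := by
  have hunit : ∀ t ∈ P, ¬ IsP3FreeOn (diskGraph 1) (t : Set (EuclideanSpace ℝ (Fin 2))) := by
    intro t ht
    obtain ⟨u, v, w, -, -, -, htuvw, huv, hvw, huw⟩ := htriple t ht
    exact htuvw ▸ not_isP3FreeOn_diskGraph_one huv hvw huw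
  have hscaled : {p | p ∈ S ∧ r p ≠ 1}.Finite := S.finite_toSet.subset fun _ hp ↦ hp.1
  rw [← Nat.cast_le (α := ℕ∞), hscaled.cast_ncard_eq, ← Set.encard_coe_eq_coe_finsetCard]
  exact p3_packing_lower_bound_general hsub
    (fun t ht t' ht' hne ↦ Finset.disjoint_coe.mpr (hdisj t ht t' ht' hne)) hunit
    (isP3FreeOn_diskGraph_iff.mpr hP3free)
end
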